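/- There exists x₀ > 0 and constants C_k such that the unique positive turning point satisfies, as E → 0+, x₁(E;ℏ) = c(ℏ) E^{-1/2} (1 + O(E^{1/2})) with c(ℏ) := √(μ₊² + ℏ²/4), where the error term is uniform in 0 < ℏ < 1 and satisfies ∂_E^k O(E^{1/2}) = O(E^{1/2 − k}) for every k ≥ 0. -/

import Mathlib

/-- The modified potential `V₀(x;ℏ) = V(x) + (ℏ²/4)⟨x⟩⁻²` where `⟨x⟩ = √(1+x²)`. -/
noncomputable def V0 (V : ℝ → ℝ) (h x : ℝ) : ℝ := V x + h ^ 2 / 4 * (1 + x ^ 2)⁻¹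

/-- The family `f i` is `O(x ^ m)` on `(X, ∞)`, uniformly in `i`. -/
def IsUniformBigO {ι : Type*} (X : ℝ) (m : ℤ) (f : ι → ℝ → ℝ) : Prop :=
  ∃ C, 0 < C ∧ ∀ i x, X < x → |f i x| ≤ C * x ^ m

namespace IsUniformBigO

variable {ι : Type*} {X Y : ℝ} {m l : ℤ} {f g : ι → ℝ → ℝ}

lemma congr (hf : IsUniformBigO X m f) (h : ∀ i x, X < x → f i x = g i x) :
    IsUniformBigO X m g := by
  obtain ⟨C, hC, hb⟩ := hf
  exact ⟨C, hC, fun i x hx => h i x hx ▸ hb i x hx⟩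

lemma mono_left (hf : IsUniformBigO X m f) (h : X ≤ Y) : IsUniformBigO Y m f := by
  obtain ⟨C, hC, hb⟩ := hf
  exact ⟨C, hC, fun i x hx => hb i x (h.trans_lt hx)⟩

lemma mono_order (hX : 1 ≤ X) (hf : IsUniformBigO X m f) (h : m ≤ l) :
    IsUniformBigO X l f := by
  obtain ⟨C, hC, hb⟩ := hf
  refine ⟨C, hC, fun i x hx => (hb i x hx).trans ?_⟩
  gcongr
  exact (hX.trans_lt hx).le

lemma add (hf : IsUniformBigO X m f) (hg : IsUniformBigO X m g) :
    IsUniformBigO X m fun i x => f i x + g i x := by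
  obtain ⟨C, hC, hfb⟩ := hf
  obtain ⟨D, hD, hgb⟩ := hg
  refine ⟨C + D, by positivity, fun i x hx => (abs_add_le _ _).trans ?_⟩
  linarith [hfb i x hx, hgb i x hx]

lemma mul (hX : 1 ≤ X) (hf : IsUniformBigO X m f) (hg : IsUniformBigO X l g) :
    IsUniformBigO X (m + l) fun i x => f i x * g i x := by
  obtain ⟨C, hC, hfb⟩ := hf
  obtain ⟨D, hD, hgb⟩ := hg
  refine ⟨C * D, by positivity, fun i x hx => ?_⟩
  have hx0 : 0 < x := by linarith
  rw [abs_mul, zpow_add₀ hx0.ne']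
  calc |f i x| * |g i x| ≤ (C * x ^ m) * (D * x ^ l) := by
        gcongr
        exacts [hfb i x hx, hgb i x hx]
    _ = _ := by ring

end IsUniformBigO

/-- The family `f i` is `n` times differentiable on `(X, ∞)`, and for `k ≤ n` its `k`-th
derivative is `O(x ^ (m - k))` there, uniformly in `i`. -/
def IsSymbol {ι : Type*} (X : ℝ) : ℕ → ℤ → (ι → ℝ → ℝ) → Prop
  | 0, m, f => IsUniformBigO X m f
  | n + 1, m, f => IsUniformBigO X m f ∧
      ∃ f' : ι → ℝ → ℝ, (∀ i x, X < x → HasDerivAt (f i) (f' i x) x) ∧ IsSymbol X n (m - 1) f'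

namespace IsSymbol

variable {ι : Type*} {X Y : ℝ} {n : ℕ} {m l : ℤ} {f g : ι → ℝ → ℝ}

lemma isUniformBigO (hf : IsSymbol X n m f) : IsUniformBigO X m f := by
  cases n with
  | zero => exact hf
  | succ n => exact hf.1

lemma congr (hf : IsSymbol X n m f) (h : ∀ i x, X < x → f i x = g i x) :
    IsSymbol X n m g := by
  cases n with
  | zero => exact hf.isUniformBigO.congr h
  | succ n =>
    obtain ⟨hb, f', hd, hf'⟩ := hf
    refine ⟨hb.congr h, f', fun i x hx => (hd i x hx).congr_of_eventuallyEq ?_, hf'⟩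
    filter_upwards [Ioi_mem_nhds hx] with z hz using (h i z hz).symm

lemma hasDerivAt (hf : IsSymbol X (n + 1) m f) (i : ι) {x : ℝ} (hx : X < x) :
    HasDerivAt (f i) (_root_.deriv (f i) x) x := by
  obtain ⟨-, f', hd, -⟩ := hf
  exact (hd i x hx).differentiableAt.hasDerivAt

lemma deriv (hf : IsSymbol X (n + 1) m f) :
    IsSymbol X n (m - 1) fun i => _root_.deriv (f i) := by
  obtain ⟨-, f', hd, hf'⟩ := hf
  exact hf'.congr fun i x hx => (hd i x hx).deriv.symm

lemma of_succ (hf : IsSymbol X (n + 1) m f) : IsSymbol X n m f := by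
  induction n generalizing m f with
  | zero => exact hf.1
  | succ n ih =>
    obtain ⟨hb, f', hd, hf'⟩ := hf
    exact ⟨hb, f', hd, ih hf'⟩

lemma mono_left (hf : IsSymbol X n m f) (h : X ≤ Y) : IsSymbol Y n m f := by
  induction n generalizing m f with
  | zero => exact hf.isUniformBigO.mono_left h
  | succ n ih =>
    obtain ⟨hb, f', hd, hf'⟩ := hf
    exact ⟨hb.mono_left h, f', fun i x hx => hd i x (h.trans_lt hx), ih hf'⟩

lemma mono_order (hX : 1 ≤ X) (hf : IsSymbol X n m f) (h : m ≤ l) : IsSymbol X n l f := by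
  induction n generalizing m l f with
  | zero => exact hf.isUniformBigO.mono_order hX h
  | succ n ih =>
    obtain ⟨hb, f', hd, hf'⟩ := hf
    exact ⟨hb.mono_order hX h, f', hd, ih hf' (sub_le_sub_right h 1)⟩

lemma add (hf : IsSymbol X n m f) (hg : IsSymbol X n m g) :
    IsSymbol X n m fun i x => f i x + g i x := by
  induction n generalizing m f g with
  | zero => exact hf.isUniformBigO.add hg.isUniformBigO
  | succ n ih =>
    exact ⟨hf.isUniformBigO.add hg.isUniformBigO, _,
      fun i x hx => (hf.hasDerivAt i hx).add (hg.hasDerivAt i hx), ih hf.deriv hg.deriv⟩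

lemma mul (hX : 1 ≤ X) (hf : IsSymbol X n m f) (hg : IsSymbol X n l g) :
    IsSymbol X n (m + l) fun i x => f i x * g i x := by
  induction n generalizing m l f g with
  | zero => exact hf.isUniformBigO.mul hX hg.isUniformBigO
  | succ n ih =>
    refine ⟨hf.isUniformBigO.mul hX hg.isUniformBigO, _,
      fun i x hx => (hf.hasDerivAt i hx).mul (hg.hasDerivAt i hx), ?_⟩
    have h₁ := ih hf.deriv hg.of_succ
    have h₂ := ih hf.of_succ hg.deriv
    rw [show m - 1 + l = m + l - 1 by ring] at h₁
    rw [show m + (l - 1) = m + l - 1 by ring] at h₂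
    exact h₁.add h₂

lemma zero (hX : 1 ≤ X) : IsSymbol X n m fun (_ : ι) _ => (0 : ℝ) := by
  have hb : ∀ {m : ℤ}, IsUniformBigO X m fun (_ : ι) _ => (0 : ℝ) := fun {m} =>
    ⟨1, one_pos, fun i x hx => by
      have : 0 < x := by linarith
      rw [abs_zero]
      positivity⟩
  induction n generalizing m with
  | zero => exact hb
  | succ n ih => exact ⟨hb, _, fun i x _ => hasDerivAt_const x 0, ih⟩

lemma const (hX : 1 ≤ X) {a : ι → ℝ} {C : ℝ} (ha : ∀ i, |a i| ≤ C) : IsSymbol X n 0 fun i _ => a i := by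
  have hb : IsUniformBigO X 0 fun i _ => a i :=
    ⟨|C| + 1, by positivity, fun i x _ => by
      simpa using (ha i).trans ((le_abs_self C).trans (by linarith))⟩
  cases n with
  | zero => exact hb
  | succ n => exact ⟨hb, _, fun i x _ => hasDerivAt_const x (a i), zero hX⟩

lemma id (hX : 1 ≤ X) : IsSymbol X n 1 fun (_ : ι) x => x := by
  have hb : IsUniformBigO X 1 fun (_ : ι) x => x :=
    ⟨1, one_pos, fun i x hx => by simp [abs_of_pos (show 0 < x by linarith)]⟩
  cases n with
  | zero => exact hb
  | succ n => exact ⟨hb, _, fun i x _ => hasDerivAt_id x, const hX (C := 1) (by simp)⟩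

lemma inv (hX : 1 ≤ X) (hf : IsSymbol X n m f) {c : ℝ} (hc : 0 < c)
    (hlow : ∀ i x, X < x → c * x ^ m ≤ |f i x|) :
    IsSymbol X n (-m) fun i x => (f i x)⁻¹ := by
  have hpos : ∀ i x, X < x → 0 < |f i x| := fun i x hx =>
    lt_of_lt_of_le (mul_pos hc (zpow_pos (by linarith) m)) (hlow i x hx)
  have hb : IsUniformBigO X (-m) fun i x => (f i x)⁻¹ := by
    refine ⟨c⁻¹, by positivity, fun i x hx => ?_⟩
    have : 0 < x := by linarith
    rw [abs_inv, zpow_neg, ← mul_inv]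
    exact inv_anti₀ (by positivity) (hlow i x hx)
  induction n with
  | zero => exact hb
  | succ n ih =>
    refine ⟨hb, _, fun i x hx => (hf.hasDerivAt i hx).inv (abs_pos.1 (hpos i x hx)), ?_⟩
    have hi := ih hf.of_succ
    have := ((hf.deriv.mul hX hi).mul hX hi).mul hX
      (const hX (a := fun _ => (-1 : ℝ)) (C := 1) (by simp))
    rw [show m - 1 + -m + -m + 0 = -m - 1 by ring] at this
    refine this.congr fun i x hx => ?_
    have := abs_pos.1 (hpos i x hx)
    field_simp

lemma sqrt (hX : 1 ≤ X) (hf : IsSymbol X n 0 f) {c : ℝ} (hc : 0 < c)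
    (hlow : ∀ i x, X < x → c ≤ f i x) :
    IsSymbol X n 0 fun i x => √(f i x) := by
  have hb : IsUniformBigO X 0 fun i x => √(f i x) := by
    obtain ⟨C, hC, hb⟩ := hf.isUniformBigO
    refine ⟨√C, by positivity, fun i x hx => ?_⟩
    have := hb i x hx
    simp only [zpow_zero, mul_one] at this ⊢
    rw [abs_of_nonneg (Real.sqrt_nonneg _)]
    exact Real.sqrt_le_sqrt ((le_abs_self _).trans this)
  induction n with
  | zero => exact hb
  | succ n ih =>
    refine ⟨hb, _, fun i x hx => (hf.hasDerivAt i hx).sqrt (hc.trans_le (hlow i x hx)).ne', ?_⟩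
    have hi : IsSymbol X n (-0) fun i x => (√(f i x))⁻¹ :=
      (ih hf.of_succ).inv hX (Real.sqrt_pos.2 hc) fun i x hx => by
        simpa [abs_of_nonneg (Real.sqrt_nonneg _)] using Real.sqrt_le_sqrt (hlow i x hx)
    have := (hf.deriv.mul hX hi).mul hX
      (const hX (a := fun _ => (1 / 2 : ℝ)) (C := 1) (by norm_num [abs_of_pos]))
    rw [show (0 : ℤ) - 1 + -0 + 0 = 0 - 1 by ring] at this
    refine this.congr fun i x hx => ?_
    have := Real.sqrt_pos.2 (hc.trans_le (hlow i x hx))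
    field_simp

lemma sqrt_one_add_sub_one (hX : 1 ≤ X) (hf : IsSymbol X n (-1) f)
    (hlow : ∀ i x, X < x → |f i x| ≤ 1 / 2) :
    IsSymbol X n (-1) fun i x => √(1 + f i x) - 1 := by
  have hone : IsSymbol X n 0 fun (_ : ι) _ => (1 : ℝ) := const hX (C := 1) (by simp)
  have hr : IsSymbol X n 0 fun i x => √(1 + f i x) :=
    (hone.add (hf.mono_order hX (by norm_num))).sqrt hX (c := 1 / 2) (by norm_num) fun i x hx => by
      linarith [abs_le.1 (hlow i x hx)]
  have hi : IsSymbol X n (-0) fun i x => (1 + √(1 + f i x))⁻¹ :=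
    (hone.add hr).inv hX one_pos fun i x hx => by
      have := Real.sqrt_nonneg (1 + f i x)
      rw [abs_of_nonneg (by positivity)]
      simp
  refine (hf.mul hX hi).congr fun i x hx => ?_
  have h₀ := Real.sqrt_nonneg (1 + f i x)
  have h₁ := Real.sq_sqrt (show 0 ≤ 1 + f i x by linarith [abs_le.1 (hlow i x hx)])
  rw [mul_inv_eq_iff_eq_mul₀ (by positivity)]
  linarith

lemma of_iteratedDeriv {R : ℝ → ℝ} (hR : ∀ n : ℕ, ∀ x, X < x → ContDiffAt ℝ n R x)
    (hb : ∀ k : ℕ, IsUniformBigO X (m - k) fun _ : ι => iteratedDeriv k R) :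
    IsSymbol X n m fun _ : ι => R := by
  suffices h : ∀ k : ℕ, IsSymbol X n (m - k) fun _ : ι => iteratedDeriv k R by
    simpa using h 0
  induction n with
  | zero => exact hb
  | succ n ih =>
    intro k
    refine ⟨hb k, fun _ => iteratedDeriv (k + 1) R, fun _ x hx => ?_, ?_⟩
    · rw [iteratedDeriv_succ]
      refine DifferentiableAt.hasDerivAt ?_
      have hR' : ContDiffOn ℝ (k + 1 : ℕ) R (Set.Ioi X) := fun z hz =>
        (hR (k + 1) z hz).contDiffWithinAt
      have hdiff := (hR'.differentiableOn_iteratedDerivWithin (m := k)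
        (by exact_mod_cast k.lt_succ_self) isOpen_Ioi.uniqueDiffOn).differentiableAt
        (Ioi_mem_nhds hx)
      refine hdiff.congr_of_eventuallyEq ?_
      filter_upwards [Ioi_mem_nhds hx] with z hz using (iteratedDerivWithin_of_isOpen isOpen_Ioi hz).symm
    · have := ih (k + 1)
      rwa [Nat.cast_succ, ← sub_sub] at this

/-- If `y' = g ∘ y` with `g` a symbol of order `3`, the `n`-th derivative of `f ∘ y` for a symbol
`f` of order `m` is bounded by a multiple of `y ^ (m + 2 n)`. -/
lemma comp_of_hasDerivAt (hX : 1 ≤ X) (hg : ∀ n, IsSymbol X n 3 g) {s : Set ℝ} (hs : IsOpen s)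
    {y : ι → ℝ → ℝ} (hy : ∀ i, ∀ t ∈ s, X < y i t)
    (hd : ∀ i, ∀ t ∈ s, HasDerivAt (y i) (g i (y i t)) t) (hf : IsSymbol X n m f) :
    (∀ i, ∀ k < n, ContDiffOn ℝ k (fun t => f i (y i t)) s) ∧
    ∃ C, 0 < C ∧ ∀ i, ∀ t ∈ s,
      |iteratedDerivWithin n (fun t => f i (y i t)) s t| ≤ C * y i t ^ (m + 2 * n) := by
  induction n generalizing m f with
  | zero =>
    obtain ⟨C, hC, hb⟩ := hf
    exact ⟨by simp, C, hC, fun i t ht => by simpa using hb i _ (hy i t ht)⟩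
  | succ n ih =>
    have hder : ∀ i, ∀ t ∈ s, HasDerivAt (fun t => f i (y i t))
        (_root_.deriv (f i) (y i t) * g i (y i t)) t := fun i t ht =>
      (hf.hasDerivAt i (hy i t ht)).comp t (hd i t ht)
    have heq : ∀ i, Set.EqOn (derivWithin (fun t => f i (y i t)) s)
        (fun t => _root_.deriv (f i) (y i t) * g i (y i t)) s := fun i t ht =>
      (hder i t ht).hasDerivWithinAt.derivWithin (hs.uniqueDiffWithinAt ht)
    obtain ⟨hc, C, hC, hb⟩ := ih (hf.deriv.mul hX (hg n))
    refine ⟨fun i k hk => ?_, C, hC, fun i t ht => ?_⟩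
    · cases k with
      | zero =>
        rw [Nat.cast_zero, contDiffOn_zero]
        exact fun t ht => (hder i t ht).continuousAt.continuousWithinAt
      | succ k =>
        rw [Nat.cast_succ, contDiffOn_succ_iff_derivWithin hs.uniqueDiffOn]
        refine ⟨fun t ht => (hder i t ht).differentiableAt.differentiableWithinAt, by simp, ?_⟩
        exact (hc i k (by omega)).congr (heq i)
    · rw [iteratedDerivWithin_succ', iteratedDerivWithin_congr (heq i) ht]
      convert hb i t ht using 3
      push_cast
      ring

end IsSymbol

/-- A perturbation of order `-3` of the inverse square potential `a / x ^ 2`: eventually the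
potential has nonvanishing derivative, and the relative size of the perturbation is a symbol. -/
lemma exists_inverseSquare_symbol {ι : Type*} {U : ι → ℝ → ℝ} {a : ι → ℝ} {A B : ℝ} (hA : 0 < A)
    (haA : ∀ i, A ≤ a i) (haB : ∀ i, a i ≤ B)
    (hU : ∀ n, IsSymbol 1 n (-3) fun i x => U i x - a i / x ^ 2) :
    ∃ X, 1 ≤ X ∧ (∀ i x, X < x → deriv (U i) x ≠ 0) ∧
      (∀ n, IsSymbol X n 3 fun i x => (deriv (U i) x)⁻¹) ∧
      (∀ i x, X < x → |x ^ 2 * U i x / a i - 1| ≤ 1 / 2) ∧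
      ∀ n, IsSymbol X n (-1) fun i x => √(x ^ 2 * U i x / a i) - 1 := by
  have ha : ∀ i, 0 < a i := fun i => hA.trans_le (haA i)
  obtain ⟨C, hC, hb⟩ := (hU 0).isUniformBigO
  obtain ⟨D, hD, hb'⟩ := (hU 1).deriv.isUniformBigO
  have hX : 1 ≤ 1 + 2 * C / A + D / A := by
    have : 0 < 2 * C / A := by positivity
    have : 0 < D / A := by positivity
    linarith
  have hsym : ∀ n, IsSymbol (1 + 2 * C / A + D / A) n (-2) U := fun n => by
    have hsq : IsSymbol (1 + 2 * C / A + D / A) n (-(1 + 1)) fun (_ : ι) x => (x * x)⁻¹ :=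
      ((IsSymbol.id hX).mul hX (IsSymbol.id hX)).inv hX one_pos fun i x hx => by
        rw [abs_of_nonneg (mul_self_nonneg x), zpow_add₀ (by linarith)]
        simp
    have := (((hU n).mono_left hX).mono_order hX (show (-3 : ℤ) ≤ -2 by norm_num)).add
      ((IsSymbol.const hX (a := a) (C := B) fun i => by rw [abs_of_pos (ha i)]; exact haB i).mul hX hsq)
    refine this.congr fun i x hx => ?_
    field_simp
    ring
  have hder : ∀ i x, 1 + 2 * C / A + D / A < x →
      A * x ^ (-3 : ℤ) ≤ |deriv (U i) x| := fun i x hx => by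
    have hx0 : 0 < x := by linarith
    have h₁ : HasDerivAt (fun x => a i / x ^ 2) (-(2 * a i * x ^ (-3 : ℤ))) x := by
      have := ((hasDerivAt_pow 2 x).inv (by positivity)).const_mul (a i)
      refine this.congr_deriv ?_
      rw [zpow_neg]
      norm_cast
      simp
      field_simp
    have h₂ : deriv (fun x => U i x - a i / x ^ 2) x = deriv (U i) x + 2 * a i * x ^ (-3 : ℤ) := by
      rw [(((hsym 1).hasDerivAt i hx).fun_sub h₁).deriv]
      ring
    have h₃ := hb' i x (by linarith)
    simp only [h₂] at h₃
    have h₄ : D * x ^ ((-3 : ℤ) - 1) ≤ A * x ^ (-3 : ℤ) := by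
      rw [zpow_sub_one₀ hx0.ne']
      have : D / A < x := by
        have : 0 < 2 * C / A := by positivity
        linarith
      rw [div_lt_iff₀ hA] at this
      rw [show D * (x ^ (-3 : ℤ) * x⁻¹) = D * x⁻¹ * x ^ (-3 : ℤ) by ring]
      gcongr
      rw [mul_inv_le_iff₀ hx0]
      linarith
    have h₅ : A * x ^ (-3 : ℤ) ≤ a i * x ^ (-3 : ℤ) := by
      gcongr
      exact haA i
    rw [abs_of_nonpos] <;> linarith [abs_le.1 h₃]
  have hq : ∀ i x, 1 + 2 * C / A + D / A < x → |x ^ 2 * U i x / a i - 1| ≤ 1 / 2 := fun i x hx => by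
    have hx0 : 0 < x := by linarith
    have h₁ := hb i x (by linarith)
    have h₂ : 2 * C / A < x := by
      have : 0 < D / A := by positivity
      linarith
    rw [div_lt_iff₀ hA] at h₂
    have h₃ : x ^ 2 * U i x / a i - 1 = x ^ 2 / a i * (U i x - a i / x ^ 2) := by
      have := ha i
      field_simp
    rw [h₃, abs_mul, abs_of_pos (by have := ha i; positivity)]
    have h₄ : x ^ (-3 : ℤ) = (x ^ 3)⁻¹ := by
      rw [zpow_neg]
      norm_cast
    calc x ^ 2 / a i * |U i x - a i / x ^ 2| ≤ x ^ 2 / A * (C * x ^ (-3 : ℤ)) := by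
          gcongr
          exact haA i
      _ = C / (A * x) := by
          rw [h₄]
          field_simp
      _ ≤ 1 / 2 := by
          rw [div_le_iff₀ (by positivity)]
          linarith
  refine ⟨_, hX, fun i x hx => ?_, fun n => ?_, hq, fun n => ?_⟩
  · have : 0 < x := by linarith
    exact abs_pos.1 (lt_of_lt_of_le (by positivity) (hder i x hx))
  · exact (hsym (n + 1)).deriv.inv hX hA hder
  · have hai : IsSymbol (1 + 2 * C / A + D / A) n 0 fun i _ => (a i)⁻¹ :=
      IsSymbol.const hX (C := A⁻¹) fun i => by
        rw [abs_of_pos (inv_pos.2 (ha i))]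
        exact inv_anti₀ hA (haA i)
    have hs : IsSymbol (1 + 2 * C / A + D / A) n (-1) fun i x => x ^ 2 * U i x / a i - 1 := by
      have := (((IsSymbol.id hX).mul hX (IsSymbol.id hX)).mul hX ((hU n).mono_left hX)).mul hX hai
      refine this.congr fun i x hx => ?_
      have := ha i
      have : 0 < x := by linarith
      field_simp
    refine (hs.sqrt_one_add_sub_one hX hq).congr fun i x _ => ?_
    simp

/-- A solution of `U (y t) = t` which is unique among positive solutions is differentiable. -/
lemma hasDerivAt_of_unique_preimage {U y : ℝ → ℝ} {s : Set ℝ} (hs : IsOpen s)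
    (hy : ∀ t ∈ s, 0 < y t ∧ U (y t) = t ∧ ∀ x, 0 < x → U x = t → x = y t) {t : ℝ} (ht : t ∈ s)
    (hU : ContDiffAt ℝ 1 U (y t)) (hU' : deriv U (y t) ≠ 0) :
    HasDerivAt y (deriv U (y t))⁻¹ t := by
  obtain ⟨hpos, heq, -⟩ := hy t ht
  have hst : HasStrictDerivAt U (deriv U (y t)) (y t) := hU.hasStrictDerivAt one_ne_zero
  have hinv := (hst.to_localInverse hU').hasDerivAt
  have htend := (hst.hasStrictFDerivAt_equiv hU').localInverse_tendsto
  have hright := hst.eventually_right_inverse hU'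
  rw [heq] at hinv htend hright
  refine hinv.congr_of_eventuallyEq ?_
  filter_upwards [hright, htend.eventually (lt_mem_nhds hpos), hs.mem_nhds ht] with z hz hz' hzs
  exact ((hy z hzs).2.2 _ hz' hz).symm

lemma zpow_le_of_sq_mul_bounds {x E A B : ℝ} (hA : 0 < A) (hx : 0 < x) (hE : 0 < E)
    (hxA : A ≤ x ^ 2 * E) (hxB : x ^ 2 * E ≤ B) (k : ℕ) :
    x ^ (-1 + 2 * k : ℤ) ≤ B ^ k * (√A)⁻¹ * E ^ ((1 : ℝ) / 2 - k) := by
  have hsE : 0 < √E := Real.sqrt_pos.2 hE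
  have hsA : 0 < √A := Real.sqrt_pos.2 hA
  have h₁ : √A ≤ x * √E := by
    rw [← Real.sqrt_sq hx.le, ← Real.sqrt_mul (sq_nonneg x)]
    exact Real.sqrt_le_sqrt hxA
  have h₂ : x⁻¹ ≤ (√A)⁻¹ * √E := by
    rw [inv_le_iff_one_le_mul₀ hx, mul_assoc, ← div_eq_inv_mul, one_le_div hsA]
    linarith
  have h₃ : (x ^ 2) ^ k ≤ B ^ k * (E ^ k)⁻¹ := by
    rw [← div_eq_mul_inv, le_div_iff₀ (by positivity), ← mul_pow]
    gcongr
  calc x ^ (-1 + 2 * k : ℤ) = (x ^ 2) ^ k * x⁻¹ := by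
        rw [zpow_add₀ hx.ne', zpow_mul, zpow_natCast, zpow_neg_one, mul_comm]
        norm_cast
    _ ≤ (B ^ k * (E ^ k)⁻¹) * ((√A)⁻¹ * √E) := by
        have : 0 ≤ B := le_trans (by positivity) hxB
        gcongr
    _ = _ := by
        rw [Real.rpow_sub hE, ← Real.sqrt_eq_rpow, Real.rpow_natCast]
        ring

lemma contDiff_V0 {V : ℝ → ℝ} {n : ℕ} (hV : ContDiff ℝ n V) (h : ℝ) : ContDiff ℝ n (V0 V h) := by
  unfold V0
  exact hV.add (contDiff_const.mul
    ((contDiff_const.add (contDiff_id.pow 2)).inv fun x => by positivity))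

lemma isSymbol_V0_sub {V : ℝ → ℝ} {μp : ℝ} (hVsmooth : ∀ n : ℕ, ContDiff ℝ n V)
    (hVp : ∀ k : ℕ, ∃ C > 0, ∀ x : ℝ, 1 ≤ x →
      |iteratedDeriv k (fun t => V t - μp ^ 2 / t ^ 2) x| ≤ C * x ^ (-3 - k : ℝ)) (n : ℕ) :
    IsSymbol 1 n (-3) fun (i : Set.Ioo (0 : ℝ) 1) x =>
      V0 V i x - (μp ^ 2 + (i : ℝ) ^ 2 / 4) / x ^ 2 := by
  have hR : IsSymbol 1 n (-3) fun (_ : Set.Ioo (0 : ℝ) 1) t => V t - μp ^ 2 / t ^ 2 := by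
    refine IsSymbol.of_iteratedDeriv (fun n x hx => ?_) fun k => ?_
    · exact (hVsmooth n).contDiffAt.sub
        (contDiffAt_const.div (contDiffAt_id.pow 2) (by positivity))
    · obtain ⟨C, hC, hb⟩ := hVp k
      refine ⟨C, hC, fun _ x hx => (hb x hx.le).trans_eq ?_⟩
      rw [← Real.rpow_intCast]
      push_cast
      rfl
  have hsq : IsSymbol 1 n (1 + 1) fun (_ : Set.Ioo (0 : ℝ) 1) x => x * x :=
    (IsSymbol.id le_rfl).mul le_rfl (IsSymbol.id le_rfl)
  have hone : IsSymbol 1 n (1 + 1) fun (_ : Set.Ioo (0 : ℝ) 1) _ => (1 : ℝ) :=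
    (IsSymbol.const le_rfl (C := 1) (by simp)).mono_order le_rfl (by norm_num)
  have hI : IsSymbol 1 n (-(1 + 1 + (1 + 1)))
      fun (_ : Set.Ioo (0 : ℝ) 1) x => (x * x * (1 + x * x))⁻¹ := by
    refine (hsq.mul le_rfl (hone.add hsq)).inv le_rfl one_pos fun i x hx => ?_
    rw [abs_of_nonneg (by positivity)]
    norm_num
    norm_cast
    nlinarith [sq_nonneg x]
  have hc : IsSymbol 1 n 0 fun (i : Set.Ioo (0 : ℝ) 1) _ => -((i : ℝ) ^ 2 / 4) :=
    IsSymbol.const le_rfl (C := 1) fun i => by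
      rw [abs_neg, abs_of_nonneg (by positivity)]
      nlinarith [i.2.1, i.2.2]
  refine (hR.add ((hc.mul le_rfl hI).mono_order le_rfl (by norm_num))).congr fun i x hx => ?_
  have : x ≠ 0 := by positivity
  have : 1 + x ^ 2 ≠ 0 := by positivity
  rw [V0, ← sq x]
  field_simp
  ring

/-- the unique positive turning point satisfies
`x₁(E;ℏ) = c(ℏ) E^{-1/2}(1 + O(E^{1/2}))` with `c(ℏ) = √(μ₊² + ℏ²/4)` as `E → 0+`,
uniformly in `0 < ℏ < 1`, and the error satisfies `∂_E^k O(E^{1/2}) = O(E^{1/2−k})`. -/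
theorem turning_point_asymptotics
    (V : ℝ → ℝ) (μp E₀ : ℝ) (hμp : μp ≠ 0) (hE₀ : 0 < E₀)
    (hVsmooth : ∀ n : ℕ, ContDiff ℝ n V)
    (hVpos : ∀ x, 0 < V x)
    (hVp : ∀ k : ℕ, ∃ C > 0, ∀ x : ℝ, 1 ≤ x →
      |iteratedDeriv k (fun t => V t - μp ^ 2 / t ^ 2) x| ≤ C * x ^ (-3 - k : ℝ))
    (x₁ : ℝ → ℝ → ℝ)
    (hx₁ : ∀ E ∈ Set.Ioo 0 E₀, ∀ h ∈ Set.Ioo (0 : ℝ) 1,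
      0 < x₁ E h ∧ V0 V h (x₁ E h) = E ∧ ∀ x, 0 < x → V0 V h x = E → x = x₁ E h) :
    ∃ E₁, 0 < E₁ ∧ E₁ ≤ E₀ ∧ ∃ err : ℝ → ℝ → ℝ,
      (∀ h ∈ Set.Ioo (0 : ℝ) 1, ∀ E ∈ Set.Ioo 0 E₁,
        x₁ E h = Real.sqrt (μp ^ 2 + h ^ 2 / 4) * E ^ (-(1 : ℝ) / 2) * (1 + err E h)) ∧
      (∀ h ∈ Set.Ioo (0 : ℝ) 1, ∀ n : ℕ,
        ContDiffOn ℝ n (fun E => err E h) (Set.Ioo 0 E₁)) ∧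
      (∀ k : ℕ, ∃ C > 0, ∀ h ∈ Set.Ioo (0 : ℝ) 1, ∀ E ∈ Set.Ioo 0 E₁,
        |iteratedDerivWithin k (fun E' => err E' h) (Set.Ioo 0 E₁) E|
          ≤ C * E ^ ((1 : ℝ) / 2 - k)) := by
  have hμ : 0 < μp ^ 2 := by positivity
  have hsym := isSymbol_V0_sub hVsmooth hVp
  obtain ⟨X, hX, hne, hinv, hq, herr⟩ := exists_inverseSquare_symbol
    (ι := Set.Ioo (0 : ℝ) 1) (U := fun i => V0 V i) (a := fun i => μp ^ 2 + (i : ℝ) ^ 2 / 4)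
    (B := μp ^ 2 + 1) hμ (fun i => by linarith [sq_nonneg (i : ℝ)])
    (fun i => by nlinarith [i.2.1, i.2.2]) hsym
  obtain ⟨z, hz, hmin⟩ := isCompact_Icc.exists_isMinOn (Set.nonempty_Icc.2 (zero_le_one.trans hX))
    (hVsmooth 0).continuous.continuousOn
  have hlt : ∀ i : Set.Ioo (0 : ℝ) 1, ∀ E ∈ Set.Ioo 0 (min E₀ (V z)), X < x₁ E i := by
    intro i E hE
    obtain ⟨hpos, heq, -⟩ := hx₁ E ⟨hE.1, hE.2.trans_le (min_le_left _ _)⟩ i i.2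
    by_contra! hle
    have h₁ : V z ≤ V (x₁ E i) := hmin ⟨hpos.le, hle⟩
    have h₂ : E < V z := hE.2.trans_le (min_le_right _ _)
    have h₃ : 0 ≤ (i : ℝ) ^ 2 / 4 * (1 + x₁ E i ^ 2)⁻¹ := by positivity
    rw [V0] at heq
    linarith
  have hder : ∀ i : Set.Ioo (0 : ℝ) 1, ∀ E ∈ Set.Ioo 0 (min E₀ (V z)),
      HasDerivAt (fun E => x₁ E i) (deriv (V0 V i) (x₁ E i))⁻¹ E := fun i E hE =>
    hasDerivAt_of_unique_preimage (y := fun E => x₁ E i) isOpen_Ioo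
      (fun t ht => hx₁ t ⟨ht.1, ht.2.trans_le (min_le_left _ _)⟩ i i.2) hE
      (contDiff_V0 (hVsmooth 1) i).contDiffAt (hne i _ (hlt i E hE))
  have hcomp := fun n => (herr n).comp_of_hasDerivAt hX hinv isOpen_Ioo
    (y := fun i E => x₁ E i) hlt hder
  have hV0 : ∀ h ∈ Set.Ioo (0 : ℝ) 1, ∀ E ∈ Set.Ioo 0 (min E₀ (V z)), V0 V h (x₁ E h) = E :=
    fun h hh E hE => (hx₁ E ⟨hE.1, hE.2.trans_le (min_le_left _ _)⟩ h hh).2.1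
  refine ⟨min E₀ (V z), lt_min hE₀ (hVpos z), min_le_left _ _,
    fun E h => √(x₁ E h ^ 2 * V0 V h (x₁ E h) / (μp ^ 2 + h ^ 2 / 4)) - 1, ?_, ?_, ?_⟩
  · intro h hh E hE
    have hx : 0 < x₁ E h := by linarith [hlt ⟨h, hh⟩ E hE]
    have hE0 : 0 < √E := Real.sqrt_pos.2 hE.1
    have hc : 0 < √(μp ^ 2 + h ^ 2 / 4) := Real.sqrt_pos.2 (by positivity)
    beta_reduce
    rw [hV0 h hh E hE, add_sub_cancel, Real.sqrt_div' _ (by positivity), Real.sqrt_mul (sq_nonneg _),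
      Real.sqrt_sq hx.le, neg_div, Real.rpow_neg hE.1.le, ← Real.sqrt_eq_rpow]
    field_simp
  · exact fun h hh n => (hcomp (n + 1)).1 ⟨h, hh⟩ n n.lt_succ_self
  · intro k
    obtain ⟨C, hC, hb⟩ := (hcomp k).2
    refine ⟨C * ((2 * (μp ^ 2 + 1)) ^ k * (√(μp ^ 2 / 2))⁻¹), by positivity, fun h hh E hE => ?_⟩
    have hx : 0 < x₁ E h := by linarith [hlt ⟨h, hh⟩ E hE]
    refine (hb ⟨h, hh⟩ E hE).trans ?_
    rw [mul_assoc]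
    refine mul_le_mul_of_nonneg_left ?_ hC.le
    have ha : 0 < μp ^ 2 + h ^ 2 / 4 := by positivity
    have hq' := abs_le.1 (hq ⟨h, hh⟩ _ (hlt ⟨h, hh⟩ E hE))
    simp only [hV0 h hh E hE] at hq'
    have h₁ : μp ^ 2 / 2 ≤ x₁ E h ^ 2 * E := by
      have := (le_div_iff₀ ha).1 (show 1 / 2 ≤ x₁ E h ^ 2 * E / (μp ^ 2 + h ^ 2 / 4) by linarith)
      linarith [sq_nonneg h]
    have h₂ : x₁ E h ^ 2 * E ≤ 2 * (μp ^ 2 + 1) := by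
      have := (div_le_iff₀ ha).1 (show x₁ E h ^ 2 * E / (μp ^ 2 + h ^ 2 / 4) ≤ 2 by linarith)
      nlinarith [hh.1, hh.2]
    exact zpow_le_of_sq_mul_bounds (by positivity) hx hE.1 h₁ h₂ k
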